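/- arXiv:1902.00225 — 10 statements merged into one kernel-verified Lean document; each statement's English description precedes it below -/
import Mathlib

section
/- Let n ≥ 1 and let A, B : ℝ → Matrix (Fin n) (Fin n) ℂ with A differentiable and satisfying the Lax equation deriv A t = A t * B t − B t * A t for every t ∈ ℝ. Then for every natural number k, the function t ↦ trace ((A t)^k) is constant on ℝ; equivalently, trace ((A t)^k) = trace ((A s)^k) for all t, s ∈ ℝ. -/
open Matrix

attribute [local instance] Matrix.frobeniusNormedAddCommGroup Matrix.frobeniusNormedSpace

/-! The commutator `[·, B t]` is a derivation, so by the Leibniz rule every power of a solution `A`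
solves the same Lax equation, `(Aᵏ)˙ = [Aᵏ, B]` (`lax_hasDerivAt_pow`). The trace is linear and
vanishes on commutators, so `trace (Aᵏ)` has derivative zero everywhere on `ℝ`. -/

attribute [local instance] Matrix.frobeniusNormedRing Matrix.frobeniusNormedAlgebra in
/-- Each power of a solution of the Lax equation solves it with the same `B`. The Frobenius norm is
submultiplicative, so the product rule in normed algebras applies. -/
theorem lax_hasDerivAt_pow {n : ℕ} {A B : ℝ → Matrix (Fin n) (Fin n) ℂ} {t : ℝ}
    (h : HasDerivAt A (A t * B t - B t * A t) t) (k : ℕ) :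
    HasDerivAt (fun u => A u ^ k) (A t ^ k * B t - B t * A t ^ k) t := by
  induction k with
  | zero =>
    simp only [pow_zero, one_mul, mul_one, sub_self]
    exact hasDerivAt_const t (1 : Matrix (Fin n) (Fin n) ℂ)
  | succ k ih =>
    have e : A t ^ (k + 1) * B t - B t * A t ^ (k + 1) =
        (A t ^ k * B t - B t * A t ^ k) * A t + A t ^ k * (A t * B t - B t * A t) := by
      rw [pow_succ]
      noncomm_ring
    simp only [e]
    simp only [pow_succ]
    exact HasDerivAt.mul ih h

/-- A Lax flow `Ȧ = [A, B] = AB - BA` preserves all the traces `trace (Aᵏ)`: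
the candidate integrals of the motion are indeed constant along the flow. -/
theorem lax_trace_pow_const (n : ℕ) (hn : 1 ≤ n)
    (A B : ℝ → Matrix (Fin n) (Fin n) ℂ)
    (hA : Differentiable ℝ A)
    (hLax : ∀ t : ℝ, deriv A t = A t * B t - B t * A t) :
    ∀ (k : ℕ) (t s : ℝ), ((A t) ^ k).trace = ((A s) ^ k).trace := by
  intro k t s
  have hD (u : ℝ) : HasDerivAt (fun v => (A v ^ k).trace) 0 u := by
    have h := lax_hasDerivAt_pow (hLax u ▸ (hA u).hasDerivAt) k
    have h2 := (LinearMap.toContinuousLinearMap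
      (Matrix.traceLinearMap (Fin n) ℝ ℂ)).hasFDerivAt.comp_hasDerivAt u h
    have h0 : (A u ^ k * B u - B u * A u ^ k).trace = 0 := by
      rw [Matrix.trace_sub, Matrix.trace_mul_comm, sub_self]
    rw [← h0]
    exact h2
  exact is_const_of_deriv_eq_zero (fun u => (hD u).differentiableAt) (fun u => (hD u).deriv) t s
end

section
/- Let n ≥ 1 and let A, B : ℝ → Matrix (Fin n) (Fin n) ℂ with A differentiable and satisfying the Lax equation deriv A t = A t * B t − B t * A t for every t ∈ ℝ. Then the characteristic polynomial of A(t) is independent of t: (A t).charpoly = (A s).charpoly for all t, s ∈ ℝ. In particular the matrix A undergoes an isospectral deformation (its spectrum is preserved by the flow). -/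
open Matrix

attribute [local instance] Matrix.frobeniusNormedAddCommGroup Matrix.frobeniusNormedSpace

/-!
For each `x : ℂ` put `M t = x • 1 - A t`, so that `det (M t)` is the characteristic polynomial of
`A t` evaluated at `x`. Scalar matrices commute with `B t`, hence `M` satisfies the same Lax
equation `M' = M B - B M`. Jacobi's formula (`hasDerivAt_det`) then gives
`(det M)' = tr (adj M * (M B - B M))`, which vanishes because `adj M * M = M * adj M = det M • 1`
and the trace is cyclic (`trace_adjugate_mul_commutator`). So `det (M t)` is constant in `t` for
every `x`, and a complex polynomial is determined by its values. No regularity of `B` is needed,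
since no conjugating flow has to be constructed.
-/

/-- Jacobi's formula, for a matrix whose entries are differentiable functions. Differentiating the
Leibniz expansion replaces one column at a time by its derivative, and Cramer's rule identifies
the resulting determinants with the diagonal entries of `adj M * M'`. -/
lemma hasDerivAt_det {n : ℕ} (M : ℝ → Matrix (Fin n) (Fin n) ℂ) (M' : Matrix (Fin n) (Fin n) ℂ)
    (t : ℝ) (h : ∀ i j, HasDerivAt (fun u => M u i j) (M' i j) t) :
    HasDerivAt (fun u => (M u).det) ((adjugate (M t) * M').trace) t := by
  have key : (adjugate (M t) * M').trace =
      ∑ σ : Equiv.Perm (Fin n), ((Equiv.Perm.sign σ : ℤ) : ℂ) *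
        ∑ i, (∏ j ∈ Finset.univ.erase i, M t (σ j) j) * M' (σ i) i := by
    have hcol : ∀ i, (adjugate (M t) * M') i i = ((M t).updateCol i (fun k => M' k i)).det := by
      intro i
      rw [← cramer_apply, cramer_eq_adjugate_mulVec]
      rfl
    simp only [trace, diag_apply, hcol, det_apply', Finset.mul_sum]
    rw [Finset.sum_comm]
    refine Finset.sum_congr rfl fun σ _ => Finset.sum_congr rfl fun i _ => ?_
    rw [← Finset.prod_erase_mul _ _ (Finset.mem_univ i), updateCol_self]
    congr 2
    refine Finset.prod_congr rfl fun j hj => ?_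
    rw [updateCol_ne (Finset.ne_of_mem_erase hj)]
  rw [key]
  simp only [det_apply']
  refine HasDerivAt.fun_sum fun σ _ => HasDerivAt.const_mul _ ?_
  simpa only [smul_eq_mul] using
    HasDerivAt.fun_finsetProd (u := Finset.univ) fun i _ => h (σ i) i

lemma trace_adjugate_mul_commutator {n : ℕ} (M B : Matrix (Fin n) (Fin n) ℂ) :
    (adjugate M * (M * B - B * M)).trace = 0 := by
  rw [Matrix.mul_sub, trace_sub, ← Matrix.mul_assoc, adjugate_mul, ← Matrix.mul_assoc,
    trace_mul_comm (adjugate M * B) M, ← Matrix.mul_assoc, mul_adjugate, sub_self]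

/-- A Lax flow `Ȧ = [A, B] = AB - BA` preserves the characteristic polynomial of `A`:
the matrix `A(t)` undergoes an isospectral deformation. -/
theorem lax_charpoly_const (n : ℕ) (hn : 1 ≤ n)
    (A B : ℝ → Matrix (Fin n) (Fin n) ℂ)
    (hA : Differentiable ℝ A)
    (hLax : ∀ t : ℝ, deriv A t = A t * B t - B t * A t) :
    ∀ t s : ℝ, (A t).charpoly = (A s).charpoly := by
  have hentry : ∀ t i j, HasDerivAt (fun u => A u i j) ((A t * B t - B t * A t) i j) t := by
    intro t i j
    -- `deriv` in the two terms uses instances on `Matrix` that agree only after unfolding,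
    -- so `rw [hLax t]` does not apply.
    have h := (hA t).hasDerivAt.congr_deriv (hLax t)
    exact (LinearMap.toContinuousLinearMap
      (Matrix.entryLinearMap ℝ ℂ i j)).hasFDerivAt.comp_hasDerivAt t h
  have hdet : ∀ (x : ℂ) (t : ℝ), HasDerivAt (fun u => (scalar (Fin n) x - A u).det) 0 t := by
    intro x t
    rw [← trace_adjugate_mul_commutator (scalar (Fin n) x - A t) (B t)]
    have hM : (scalar (Fin n) x - A t) * B t - B t * (scalar (Fin n) x - A t)
        = -(A t * B t - B t * A t) := by
      have hc : scalar (Fin n) x * B t = B t * scalar (Fin n) x :=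
        scalar_commute x (fun r => Commute.all x r) (B t)
      rw [Matrix.sub_mul, Matrix.mul_sub, hc]
      abel
    rw [hM]
    exact hasDerivAt_det _ _ t fun i j => (hentry t i j).const_sub (scalar (Fin n) x i j)
  intro t s
  refine Polynomial.funext fun x => ?_
  rw [eval_charpoly, eval_charpoly]
  exact is_const_of_deriv_eq_zero (fun u => (hdet x u).differentiableAt)
    (fun u => (hdet x u).deriv) t s
end

section
/- Let R be a commutative ring, n ≥ 1, and let Ω and J be n×n matrices over R. Set M = ΩJ + JΩ. Then the commutator identity ⁅M, J⁆ + ⁅J², Ω⁆ = 0 holds, and consequently for every scalar h ∈ R one has ⁅M + h•J², Ω + h•J⁆ = ⁅M, Ω⁆. In particular a differentiable curve M(t) = Ω(t)J + JΩ(t) satisfies the rigid-body equation dM/dt = [M, Ω] if and only if it satisfies the Lax equation with parameter d/dt (M + h J²) = [M + h J², Ω + h J] for every h. -/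
/-!
The bracket `⁅M + h • J ^ 2, Ω + h • J⁆` is a polynomial in `h` with constant term `⁅M, Ω⁆`, linear
coefficient `⁅M, J⁆ + ⁅J ^ 2, Ω⁆` and quadratic coefficient `⁅J ^ 2, J⁆ = 0`. The linear coefficient
vanishes because `⁅Ω * J + J * Ω, J⁆ = Ω * J ^ 2 - J ^ 2 * Ω`.
-/

/-- Manakov's trick for the `n`-dimensional rigid body: with `M = ΩJ + JΩ` one has
`⁅M, J⁆ + ⁅J², Ω⁆ = 0`, hence `⁅M + h•J², Ω + h•J⁆ = ⁅M, Ω⁆` for every scalar `h`;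
in particular a curve with derivative `D` satisfies the rigid body equation `Ṁ = ⁅M, Ω⁆`
iff it satisfies the Lax equation with parameter `(M + hJ²)˙ = ⁅M + hJ², Ω + hJ⁆` for
every `h`. -/
theorem manakov_trick {R : Type*} [CommRing R] (n : ℕ) (hn : 1 ≤ n)
    (Ω J M : Matrix (Fin n) (Fin n) R)
    (hM : M = Ω * J + J * Ω) :
    ⁅M, J⁆ + ⁅J ^ 2, Ω⁆ = 0 ∧
    (∀ h : R, ⁅M + h • J ^ 2, Ω + h • J⁆ = ⁅M, Ω⁆) ∧
    (∀ D : Matrix (Fin n) (Fin n) R,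
      D = ⁅M, Ω⁆ ↔ ∀ h : R, D = ⁅M + h • J ^ 2, Ω + h • J⁆) := by
  have h1 : ⁅M, J⁆ + ⁅J ^ 2, Ω⁆ = 0 := by
    rw [hM, Ring.lie_def, Ring.lie_def]
    noncomm_ring
  have h2 : ∀ h : R, ⁅M + h • J ^ 2, Ω + h • J⁆ = ⁅M, Ω⁆ := by
    intro h
    have hJ : ⁅J ^ 2, J⁆ = 0 := ((Commute.refl J).pow_left 2).lie_eq
    calc ⁅M + h • J ^ 2, Ω + h • J⁆
        = ⁅M, Ω⁆ + h • (⁅M, J⁆ + ⁅J ^ 2, Ω⁆) + h • h • ⁅J ^ 2, J⁆ := by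
          simp only [Ring.lie_def, add_mul, mul_add, smul_mul_assoc, mul_smul_comm, smul_add,
            smul_sub]
          abel
      _ = ⁅M, Ω⁆ := by simp [h1, hJ]
  refine ⟨h1, h2, fun D => ⟨fun hD h => by rw [h2 h, hD], fun hD => ?_⟩⟩
  rw [hD 0, h2 0]
end

section
/- Consider ℂ⁵ (or ℝ⁵) with coordinates x_1,…,x_5 indexed cyclically mod 5 and the Poisson matrix J with entries J_{jk}(x) = x_j x_k (δ_{j,k+1} − δ_{j+1,k}). Let H_1 = x_1x_3 + x_2x_4 + x_3x_5 + x_4x_1 + x_5x_2, H_2 = x_1 + x_2 + x_3 + x_4 + x_5, and H_3 = x_1x_2x_3x_4x_5. Then: (i) H_1 and H_2 are in involution, i.e. {H_1, H_2} = Σ_{j,k} J_{jk} (∂H_1/∂x_j)(∂H_2/∂x_k) = 0 identically; and (ii) H_3 is a Casimir function, i.e. Σ_k J_{jk} ∂H_3/∂x_k = 0 identically for every j. -/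
/-!
The only nonzero entries of row `j` of the Poisson matrix are in the columns `j - 1` and `j + 1`, so
`∑ k, J j k * f k = x j * (x (j - 1) * f (j - 1) - x (j + 1) * f (j + 1))`
(`kvmPoisson_sum`). With `f = ∇H₃`, both products on the right equal `H₃`, which gives the Casimir
property. With `f = ∇H₂ = 1` one gets the Kac–van Moerbeke vector field, along which the derivative
of `H₁` is
`∑ j, (x (j + 2) + x (j - 2)) * x j * (x (j - 1) - x (j + 1))`; this vanishes because its cubic
monomials cancel in pairs under cyclic shifts.
-/

open MvPolynomial

/-- The quadratic Poisson matrix of the periodic 5-particle Kac–van Moerbeke lattice: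
`J j k (x) = x j * x k * (δ_{j,k+1} - δ_{j+1,k})` (indices mod 5). -/
def kvmPoisson (x : ZMod 5 → ℂ) (j k : ZMod 5) : ℂ :=
  x j * x k * ((if j = k + 1 then 1 else 0) - (if j + 1 = k then 1 else 0))

/-- `H₁ = x₁x₃ + x₂x₄ + x₃x₅ + x₄x₁ + x₅x₂ = ∑_j x_j x_{j+2}` (indices mod 5). -/
noncomputable def kvmH1 : MvPolynomial (ZMod 5) ℂ := ∑ j : ZMod 5, X j * X (j + 2)

/-- `H₂ = x₁ + x₂ + x₃ + x₄ + x₅`. -/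
noncomputable def kvmH2 : MvPolynomial (ZMod 5) ℂ := ∑ j : ZMod 5, X j

/-- `H₃ = x₁x₂x₃x₄x₅`. -/
noncomputable def kvmH3 : MvPolynomial (ZMod 5) ℂ := ∏ j : ZMod 5, X j

/-- The Hamiltonian vector field of a function with gradient `f`. -/
lemma kvmPoisson_sum (x f : ZMod 5 → ℂ) (j : ZMod 5) :
    ∑ k : ZMod 5, kvmPoisson x j k * f k =
      x j * (x (j - 1) * f (j - 1) - x (j + 1) * f (j + 1)) := by
  have h (k : ZMod 5) : kvmPoisson x j k * f k =
      (if j - 1 = k then x j * (x k * f k) else 0) -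
        (if j + 1 = k then x j * (x k * f k) else 0) := by
    simp only [kvmPoisson, ← sub_eq_iff_eq_add]
    split_ifs <;> ring
  simp only [h, Finset.sum_sub_distrib, Finset.sum_ite_eq, Finset.mem_univ, if_true]
  ring

lemma eval_pderiv_kvmH1 (x : ZMod 5 → ℂ) (j : ZMod 5) :
    eval x (pderiv j kvmH1) = x (j + 2) + x (j - 2) := by
  simp [kvmH1, Derivation.leibniz, pderiv_X, Pi.single_apply, Finset.sum_add_distrib,
    ← eq_sub_iff_add_eq, add_comm]

lemma eval_pderiv_kvmH2 (x : ZMod 5 → ℂ) (k : ZMod 5) :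
    eval x (pderiv k kvmH2) = 1 := by
  simp [kvmH2, pderiv_X, Pi.single_apply]

/-- `H₃` is linear homogeneous in each variable, so `x k * ∂H₃/∂x k = H₃`. -/
lemma mul_eval_pderiv_kvmH3 (x : ZMod 5 → ℂ) (k : ZMod 5) :
    x k * eval x (pderiv k kvmH3) = eval x kvmH3 := by
  have h : pderiv k (∏ i ∈ Finset.univ.erase k, (X i : MvPolynomial (ZMod 5) ℂ)) = 0 := by
    refine Finset.prod_induction _ (fun p => pderiv k p = 0) (fun p q hp hq => ?_)
      pderiv_one fun i hi => pderiv_X_of_ne (Finset.ne_of_mem_erase hi)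
    rw [Derivation.leibniz, hp, hq, smul_zero, smul_zero, add_zero]
  rw [kvmH3, ← Finset.mul_prod_erase _ _ (Finset.mem_univ k), Derivation.leibniz, h]
  simp

/-- For the Kac–van Moerbeke Poisson structure: `H₁` and `H₂` are in involution,
`{H₁, H₂} = 0`, and `H₃` is a Casimir function. -/
theorem kvm_involution_and_casimir :
    (∀ x : ZMod 5 → ℂ,
      ∑ j : ZMod 5, ∑ k : ZMod 5, kvmPoisson x j k *
        MvPolynomial.eval x (MvPolynomial.pderiv j kvmH1) *
        MvPolynomial.eval x (MvPolynomial.pderiv k kvmH2) = 0) ∧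
    (∀ (x : ZMod 5 → ℂ) (j : ZMod 5),
      ∑ k : ZMod 5, kvmPoisson x j k *
        MvPolynomial.eval x (MvPolynomial.pderiv k kvmH3) = 0) := by
  refine ⟨fun x => ?_, fun x j => ?_⟩
  · have h (j : ZMod 5) : ∑ k : ZMod 5, kvmPoisson x j k * eval x (pderiv j kvmH1) *
        eval x (pderiv k kvmH2) =
        (x (j + 2) + x (j - 2)) * (x j * (x (j - 1) - x (j + 1))) := by
      simp only [mul_right_comm _ (eval x (pderiv j kvmH1)), ← Finset.sum_mul]
      rw [kvmPoisson_sum, eval_pderiv_kvmH1, eval_pderiv_kvmH2, eval_pderiv_kvmH2]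
      ring
    simp only [h]
    -- `ZMod 5` unfolds to `Fin 5`, so the cyclic sum can be written out term by term.
    change ∑ j : Fin 5, (x (j + 2 : Fin 5) + x (j - 2 : Fin 5)) *
      (x j * (x (j - 1 : Fin 5) - x (j + 1 : Fin 5))) = 0
    simp only [Fin.sum_univ_five, Fin.reduceAdd, Fin.reduceSub]
    ring
  · rw [kvmPoisson_sum, mul_eval_pderiv_kvmH3, mul_eval_pderiv_kvmH3, sub_self, mul_zero]
end

section
/- Fix a ∈ ℂ and consider on ℂ⁴ with coordinates (y_1, y_2, x_1, x_2) the polynomials H_1 = ½(x_1² + x_2²) + (a/2)(y_1² + 16 y_2²) + y_1² y_2 + (16/3) y_2³ and H_2 = 3x_1⁴ + 6a x_1² y_1² + 12 x_1² y_1² y_2 − 4 x_1 x_2 y_1³ − 4a y_1⁴ y_2 − 4 y_1⁴ y_2² + 3a² y_1⁴ − (2/3) y_1⁶. Then H_1 and H_2 are in involution for the canonical Poisson bracket: {H_1, H_2} = Σ_{k=1}^{2} ( (∂H_1/∂x_k)(∂H_2/∂y_k) − (∂H_1/∂y_k)(∂H_2/∂x_k) ) = 0 identically on ℂ⁴. 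-/
/-!
Both `H₁` and `H₂` are polynomials, so the eight partial derivatives are computed by expanding in
powers of the active variable and applying `deriv_sextic`. After substitution, the bracket is a
polynomial in `a, y₁, y₂, x₁, x₂` in which all monomials cancel; the coefficient `16`
of `y₂²` in `H₁` (and `16/3` of `y₂³`) is what makes the `x₁ y₁³ y₂` and `x₁ y₁³ y₂²` terms vanish.
-/

/-- The generalized Hénon–Heiles Hamiltonian
`H₁ = ½(x₁² + x₂²) + (a/2)(y₁² + 16y₂²) + y₁²y₂ + (16/3)y₂³`. -/
noncomputable def hhH1 (a : ℂ) (y1 y2 x1 x2 : ℂ) : ℂ :=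
  (1 / 2) * (x1 ^ 2 + x2 ^ 2) + (a / 2) * (y1 ^ 2 + 16 * y2 ^ 2)
    + y1 ^ 2 * y2 + (16 / 3) * y2 ^ 3

/-- The second integral of motion of the generalized Hénon–Heiles system. -/
noncomputable def hhH2 (a : ℂ) (y1 y2 x1 x2 : ℂ) : ℂ :=
  3 * x1 ^ 4 + 6 * a * x1 ^ 2 * y1 ^ 2 + 12 * x1 ^ 2 * y1 ^ 2 * y2
    - 4 * x1 * x2 * y1 ^ 3 - 4 * a * y1 ^ 4 * y2 - 4 * y1 ^ 4 * y2 ^ 2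
    + 3 * a ^ 2 * y1 ^ 4 - (2 / 3) * y1 ^ 6

/-- Derivative of a polynomial of degree at most six without quintic term. No polynomial
obtained from `H₁` or `H₂` by freezing three of the variables has a quintic term. -/
lemma deriv_sextic {f : ℂ → ℂ} (c0 c1 c2 c3 c4 c6 z : ℂ)
    (hf : ∀ s, f s = c0 + c1 * s + c2 * s ^ 2 + c3 * s ^ 3 + c4 * s ^ 4 + c6 * s ^ 6) :
    deriv f z = c1 + 2 * c2 * z + 3 * c3 * z ^ 2 + 4 * c4 * z ^ 3 + 6 * c6 * z ^ 5 := by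
  have hpow (c : ℂ) (n : ℕ) : HasDerivAt (fun s : ℂ => c * s ^ n) (c * (n * z ^ (n - 1))) z :=
    (hasDerivAt_pow n z).const_mul c
  have h := ((((((hasDerivAt_id z).const_mul c1).const_add c0).add (hpow c2 2)).add
    (hpow c3 3)).add (hpow c4 4)).add (hpow c6 6)
  have hfun : f = _ := funext hf
  rw [hfun]
  refine h.deriv.trans ?_
  push_cast
  ring

/-- The Hénon–Heiles integrals `H₁` and `H₂` are in involution for the canonical Poisson
bracket: `{H₁, H₂} = ∑ₖ (∂H₁/∂xₖ ∂H₂/∂yₖ - ∂H₁/∂yₖ ∂H₂/∂xₖ) = 0` identically on `ℂ⁴`. -/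
theorem hh_poisson_commute (a : ℂ) :
    ∀ y1 y2 x1 x2 : ℂ,
      deriv (fun s => hhH1 a y1 y2 s x2) x1 * deriv (fun s => hhH2 a s y2 x1 x2) y1
      - deriv (fun s => hhH1 a s y2 x1 x2) y1 * deriv (fun s => hhH2 a y1 y2 s x2) x1
      + deriv (fun s => hhH1 a y1 y2 x1 s) x2 * deriv (fun s => hhH2 a y1 s x1 x2) y2
      - deriv (fun s => hhH1 a y1 s x1 x2) y2 * deriv (fun s => hhH2 a y1 y2 x1 s) x2
      = 0 := by
  intro y1 y2 x1 x2
  have hH1_x1 := deriv_sextic (f := fun s => hhH1 a y1 y2 s x2)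
    (x2 ^ 2 / 2 + (a / 2) * (y1 ^ 2 + 16 * y2 ^ 2) + y1 ^ 2 * y2 + (16 / 3) * y2 ^ 3) 0 (1 / 2) 0 0 0 x1
    (fun s => by simp only [hhH1]; ring)
  have hH2_y1 := deriv_sextic (f := fun s => hhH2 a s y2 x1 x2)
    (3 * x1 ^ 4) 0 (6 * a * x1 ^ 2 + 12 * x1 ^ 2 * y2) (-4 * x1 * x2) (-4 * a * y2 - 4 * y2 ^ 2 + 3 * a ^ 2) (-2 / 3) y1
    (fun s => by simp only [hhH2]; ring)
  have hH1_y1 := deriv_sextic (f := fun s => hhH1 a s y2 x1 x2)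
    ((x1 ^ 2 + x2 ^ 2) / 2 + 8 * a * y2 ^ 2 + (16 / 3) * y2 ^ 3) 0 (a / 2 + y2) 0 0 0 y1
    (fun s => by simp only [hhH1]; ring)
  have hH2_x1 := deriv_sextic (f := fun s => hhH2 a y1 y2 s x2)
    (-4 * a * y1 ^ 4 * y2 - 4 * y1 ^ 4 * y2 ^ 2 + 3 * a ^ 2 * y1 ^ 4 - (2 / 3) * y1 ^ 6) (-4 * x2 * y1 ^ 3) (6 * a * y1 ^ 2 + 12 * y1 ^ 2 * y2) 0 3 0 x1
    (fun s => by simp only [hhH2]; ring)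
  have hH1_x2 := deriv_sextic (f := fun s => hhH1 a y1 y2 x1 s)
    (x1 ^ 2 / 2 + (a / 2) * (y1 ^ 2 + 16 * y2 ^ 2) + y1 ^ 2 * y2 + (16 / 3) * y2 ^ 3) 0 (1 / 2) 0 0 0 x2
    (fun s => by simp only [hhH1]; ring)
  have hH2_y2 := deriv_sextic (f := fun s => hhH2 a y1 s x1 x2)
    (3 * x1 ^ 4 + 6 * a * x1 ^ 2 * y1 ^ 2 - 4 * x1 * x2 * y1 ^ 3 + 3 * a ^ 2 * y1 ^ 4 - (2 / 3) * y1 ^ 6) (12 * x1 ^ 2 * y1 ^ 2 - 4 * a * y1 ^ 4) (-4 * y1 ^ 4) 0 0 0 y2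
    (fun s => by simp only [hhH2]; ring)
  have hH1_y2 := deriv_sextic (f := fun s => hhH1 a y1 s x1 x2)
    ((x1 ^ 2 + x2 ^ 2) / 2 + (a / 2) * y1 ^ 2) (y1 ^ 2) (8 * a) (16 / 3) 0 0 y2
    (fun s => by simp only [hhH1]; ring)
  have hH2_x2 := deriv_sextic (f := fun s => hhH2 a y1 y2 x1 s)
    (3 * x1 ^ 4 + 6 * a * x1 ^ 2 * y1 ^ 2 + 12 * x1 ^ 2 * y1 ^ 2 * y2 - 4 * a * y1 ^ 4 * y2
      - 4 * y1 ^ 4 * y2 ^ 2 + 3 * a ^ 2 * y1 ^ 4 - (2 / 3) * y1 ^ 6) (-4 * x1 * y1 ^ 3) 0 0 0 0 x2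
    (fun s => by simp only [hhH2]; ring)
  rw [hH1_x1, hH2_y1, hH1_y1, hH2_x1, hH1_x2, hH2_y2, hH1_y2, hH2_x2]
  ring
end

section
/- Fix a ∈ ℂ and suppose y_1, y_2, x_1, x_2 : ℝ → ℂ are differentiable and solve the generalized Hénon–Heiles system ẏ_1 = x_1, ẏ_2 = x_2, ẋ_1 = −a y_1 − 2 y_1 y_2, ẋ_2 = −16a y_2 − y_1² − 16 y_2². Define z_1 = y_1², z_2 = y_2, z_3 = x_2, z_4 = y_1 x_1, z_5 = 3 x_1² + 2 y_1² y_2. Then (z_1,…,z_5) solves the five-dimensional system ż_1 = 2 z_4, ż_2 = z_3, ż_3 = −z_1 − 16a z_2 − 16 z_2², ż_4 = −a z_1 + (1/3) z_5 − (8/3) z_1 z_2, ż_5 = −6a z_4 + 2 z_1 z_3 − 8 z_2 z_4. -/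
/-! Each identity is the product rule applied to a polynomial in `y₁, y₂, x₁, x₂`, after which
the Hénon–Heiles equations are substituted and the two sides agree as polynomials. -/

/-- Solutions of the generalized Hénon–Heiles system
`ẏ₁ = x₁, ẏ₂ = x₂, ẋ₁ = -a y₁ - 2 y₁ y₂, ẋ₂ = -16a y₂ - y₁² - 16 y₂²` are mapped, by
`z₁ = y₁², z₂ = y₂, z₃ = x₂, z₄ = y₁ x₁, z₅ = 3x₁² + 2y₁²y₂`, to solutions of the
five-dimensional system
`ż₁ = 2z₄, ż₂ = z₃, ż₃ = -z₁ - 16a z₂ - 16z₂², ż₄ = -a z₁ + z₅/3 - (8/3) z₁ z₂,`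
`ż₅ = -6a z₄ + 2z₁z₃ - 8z₂z₄`. -/
theorem hh_to_five_dim (a : ℂ) (y1 y2 x1 x2 : ℝ → ℂ)
    (hy1 : Differentiable ℝ y1) (hy2 : Differentiable ℝ y2)
    (hx1 : Differentiable ℝ x1) (hx2 : Differentiable ℝ x2)
    (h1 : ∀ t, deriv y1 t = x1 t)
    (h2 : ∀ t, deriv y2 t = x2 t)
    (h3 : ∀ t, deriv x1 t = -a * y1 t - 2 * y1 t * y2 t)
    (h4 : ∀ t, deriv x2 t = -16 * a * y2 t - (y1 t) ^ 2 - 16 * (y2 t) ^ 2) :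
    ∀ t : ℝ,
      deriv (fun s => (y1 s) ^ 2) t = 2 * (y1 t * x1 t) ∧
      deriv (fun s => y2 s) t = x2 t ∧
      deriv (fun s => x2 s) t =
        -(y1 t) ^ 2 - 16 * a * y2 t - 16 * (y2 t) ^ 2 ∧
      deriv (fun s => y1 s * x1 s) t =
        -a * (y1 t) ^ 2 + (1 / 3) * (3 * (x1 t) ^ 2 + 2 * (y1 t) ^ 2 * y2 t)
          - (8 / 3) * (y1 t) ^ 2 * y2 t ∧
      deriv (fun s => 3 * (x1 s) ^ 2 + 2 * (y1 s) ^ 2 * y2 s) t =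
        -6 * a * (y1 t * x1 t) + 2 * (y1 t) ^ 2 * x2 t
          - 8 * y2 t * (y1 t * x1 t) := by
  intro t
  have d1 : HasDerivAt y1 (x1 t) t := h1 t ▸ (hy1 t).hasDerivAt
  have d2 : HasDerivAt y2 (x2 t) t := h2 t ▸ (hy2 t).hasDerivAt
  have d3 : HasDerivAt x1 (-a * y1 t - 2 * y1 t * y2 t) t := h3 t ▸ (hx1 t).hasDerivAt
  refine ⟨?_, h2 t, ?_, ?_, ?_⟩
  · refine (d1.fun_pow 2).deriv.trans ?_
    push_cast
    ring
  · refine (h4 t).trans ?_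
    ring
  · refine (d1.fun_mul d3).deriv.trans ?_
    ring
  · refine (((d3.fun_pow 2).const_mul 3).fun_add
      (((d1.fun_pow 2).const_mul 2).fun_mul d2)).deriv.trans ?_
    push_cast
    ring
end

section
/- Fix a ∈ ℂ. On ℂ⁵ with coordinates (z_1,…,z_5), let X be the polynomial vector field X = (2z_4, z_3, −z_1 − 16a z_2 − 16z_2², −a z_1 + (1/3)z_5 − (8/3)z_1 z_2, −6a z_4 + 2z_1 z_3 − 8z_2 z_4), let F_1 = (a/2)z_1 + (1/6)z_5 + 8a z_2² + ½ z_3² + (2/3) z_1 z_2 + (16/3) z_2³, F_2 = 9a² z_1² + z_5² + 6a z_1 z_5 − 2 z_1³ − 24a z_1² z_2 − 12 z_1 z_3 z_4 + 24 z_2 z_4² − 16 z_1² z_2², F_3 = z_1 z_5 − 3 z_4² − 2 z_1² z_2, and let J(z) be the skew-symmetric 5×5 matrix with nonzero entries J_{14} = 2z_1, J_{15} = 12 z_4, J_{23} = 1, J_{35} = −2z_1, J_{45} = −8 z_1 z_2 + 2 z_5 (and J_{kl} = −J_{lk}). Then: (i) X = J ∇F_1, i.e. the system is Hamiltonian with Hamiltonian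 F_1; (ii) J ∇F_3 = 0 identically, i.e. F_3 is a Casimir; (iii) ⟨∇F_2, J ∇F_1⟩ = 0 identically, i.e. F_1 and F_2 are in involution; and (iv) each F_k (k = 1,2,3) is a first integral of X: ⟨∇F_k, X⟩ = 0 identically on ℂ⁵. -/
/-!
Each `F_i` restricted to a coordinate line is a polynomial of degree at most three, so its
partial derivatives can be read off from coefficients (`pdz_of_cubic`). With the three gradients
in closed form, `X = J ∇F₁` and `J ∇F₃ = 0` are polynomial identities in each component, as is
the vanishing of `⟨∇F_i, X⟩`. The involution of `F₁` and `F₂` is then the fact that `F₂` is a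
first integral, with `X` rewritten as `J ∇F₁`.
-/

/-- Partial derivative `∂F/∂z_k` of a function `F : ℂ⁵ → ℂ` at the point `z`. -/
noncomputable def pdz (F : (Fin 5 → ℂ) → ℂ) (z : Fin 5 → ℂ) (k : Fin 5) : ℂ :=
  deriv (fun s => F (Function.update z k s)) (z k)

/-- The five-dimensional Hénon–Heiles vector field. -/
noncomputable def hh5X (a : ℂ) (z : Fin 5 → ℂ) : Fin 5 → ℂ :=
  ![2 * z 3,
    z 2,
    -z 0 - 16 * a * z 1 - 16 * (z 1) ^ 2,
    -a * z 0 + (1 / 3) * z 4 - (8 / 3) * z 0 * z 1,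
    -6 * a * z 3 + 2 * z 0 * z 2 - 8 * z 1 * z 3]

/-- `F₁ = (a/2)z₁ + (1/6)z₅ + 8a z₂² + ½z₃² + (2/3)z₁z₂ + (16/3)z₂³`. -/
noncomputable def hh5F1 (a : ℂ) (z : Fin 5 → ℂ) : ℂ :=
  (a / 2) * z 0 + (1 / 6) * z 4 + 8 * a * (z 1) ^ 2 + (1 / 2) * (z 2) ^ 2
    + (2 / 3) * z 0 * z 1 + (16 / 3) * (z 1) ^ 3

/-- `F₂ = 9a²z₁² + z₅² + 6a z₁z₅ - 2z₁³ - 24a z₁²z₂ - 12 z₁z₃z₄ + 24 z₂z₄² - 16 z₁²z₂²`. -/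
noncomputable def hh5F2 (a : ℂ) (z : Fin 5 → ℂ) : ℂ :=
  9 * a ^ 2 * (z 0) ^ 2 + (z 4) ^ 2 + 6 * a * z 0 * z 4 - 2 * (z 0) ^ 3
    - 24 * a * (z 0) ^ 2 * z 1 - 12 * z 0 * z 2 * z 3 + 24 * z 1 * (z 3) ^ 2
    - 16 * (z 0) ^ 2 * (z 1) ^ 2

/-- `F₃ = z₁z₅ - 3z₄² - 2z₁²z₂`. -/
noncomputable def hh5F3 (z : Fin 5 → ℂ) : ℂ :=
  z 0 * z 4 - 3 * (z 3) ^ 2 - 2 * (z 0) ^ 2 * z 1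

/-- The skew-symmetric Poisson matrix of the five-dimensional Hénon–Heiles system. -/
def hh5J (z : Fin 5 → ℂ) : Matrix (Fin 5) (Fin 5) ℂ :=
  !![0, 0, 0, 2 * z 0, 12 * z 3;
     0, 0, 1, 0, 0;
     0, -1, 0, 0, -2 * z 0;
     -2 * z 0, 0, 0, 0, -8 * z 0 * z 1 + 2 * z 4;
     -12 * z 3, 0, 2 * z 0, 8 * z 0 * z 1 - 2 * z 4, 0]

/-- A function that is cubic along the `k`-th coordinate line has the expected derivative there;
the coefficients may depend on the other coordinates. -/
theorem pdz_of_cubic (F : (Fin 5 → ℂ) → ℂ) (z : Fin 5 → ℂ) (k : Fin 5) (c₀ c₁ c₂ c₃ : ℂ)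
    (h : ∀ s, F (Function.update z k s) = c₀ + c₁ * s + c₂ * s ^ 2 + c₃ * s ^ 3) :
    pdz F z k = c₁ + 2 * c₂ * z k + 3 * c₃ * z k ^ 2 := by
  have hd : HasDerivAt (fun s : ℂ => c₀ + c₁ * s + c₂ * s ^ 2 + c₃ * s ^ 3)
      (c₁ + 2 * c₂ * z k + 3 * c₃ * z k ^ 2) (z k) := by
    refine HasDerivAt.congr_deriv (((((hasDerivAt_id' (z k)).const_mul c₁).const_add c₀).add
      ((hasDerivAt_pow 2 (z k)).const_mul c₂)).add
      ((hasDerivAt_pow 3 (z k)).const_mul c₃)) ?_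
    push_cast
    ring
  rw [pdz, funext h]
  exact hd.deriv

theorem pdz_hh5F1 (a : ℂ) (z : Fin 5 → ℂ) :
    pdz (hh5F1 a) z =
      ![a / 2 + (2 / 3) * z 1,
        16 * a * z 1 + (2 / 3) * z 0 + 16 * z 1 ^ 2,
        z 2,
        0,
        1 / 6] := by
  funext k
  fin_cases k
  · refine (pdz_of_cubic _ z 0
      ((1 / 6) * z 4 + 8 * a * (z 1) ^ 2 + (1 / 2) * (z 2) ^ 2 + (16 / 3) * (z 1) ^ 3)
      (a / 2 + (2 / 3) * z 1) 0 0 fun s => ?_).trans ?_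
    · simp [hh5F1]
      ring
    · change _ = a / 2 + (2 / 3) * z 1
      ring
  · refine (pdz_of_cubic _ z 1 ((a / 2) * z 0 + (1 / 6) * z 4 + (1 / 2) * (z 2) ^ 2)
      ((2 / 3) * z 0) (8 * a) (16 / 3) fun s => ?_).trans ?_
    · simp [hh5F1]
      ring
    · change _ = 16 * a * z 1 + (2 / 3) * z 0 + 16 * z 1 ^ 2
      ring
  · refine (pdz_of_cubic _ z 2
      ((a / 2) * z 0 + (1 / 6) * z 4 + 8 * a * (z 1) ^ 2 + (2 / 3) * z 0 * z 1
        + (16 / 3) * (z 1) ^ 3)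
      0 (1 / 2) 0 fun s => ?_).trans ?_
    · simp [hh5F1]
      ring
    · change _ = z 2
      ring
  · refine (pdz_of_cubic _ z 3 (hh5F1 a z)
      0 0 0 fun s => ?_).trans ?_
    · simp [hh5F1]
    · change _ = 0
      ring
  · refine (pdz_of_cubic _ z 4
      ((a / 2) * z 0 + 8 * a * (z 1) ^ 2 + (1 / 2) * (z 2) ^ 2 + (2 / 3) * z 0 * z 1
        + (16 / 3) * (z 1) ^ 3)
      (1 / 6) 0 0 fun s => ?_).trans ?_
    · simp [hh5F1]
      ring
    · change _ = 1 / 6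
      ring

theorem pdz_hh5F2 (a : ℂ) (z : Fin 5 → ℂ) :
    pdz (hh5F2 a) z =
      ![18 * a ^ 2 * z 0 + 6 * a * z 4 - 6 * z 0 ^ 2 - 48 * a * z 0 * z 1 - 12 * z 2 * z 3
          - 32 * z 0 * z 1 ^ 2,
        -24 * a * z 0 ^ 2 + 24 * z 3 ^ 2 - 32 * z 0 ^ 2 * z 1,
        -12 * z 0 * z 3,
        -12 * z 0 * z 2 + 48 * z 1 * z 3,
        2 * z 4 + 6 * a * z 0] := by
  funext k
  fin_cases k
  · refine (pdz_of_cubic _ z 0 (z 4 ^ 2 + 24 * z 1 * z 3 ^ 2)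
      (6 * a * z 4 - 12 * z 2 * z 3) (9 * a ^ 2 - 24 * a * z 1 - 16 * z 1 ^ 2) (-2)
      fun s => ?_).trans ?_
    · simp [hh5F2]
      ring
    · change _ = 18 * a ^ 2 * z 0 + 6 * a * z 4 - 6 * z 0 ^ 2 - 48 * a * z 0 * z 1
        - 12 * z 2 * z 3 - 32 * z 0 * z 1 ^ 2
      ring
  · refine (pdz_of_cubic _ z 1
      (9 * a ^ 2 * z 0 ^ 2 + z 4 ^ 2 + 6 * a * z 0 * z 4 - 2 * z 0 ^ 3 - 12 * z 0 * z 2 * z 3)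
      (-24 * a * z 0 ^ 2 + 24 * z 3 ^ 2) (-16 * z 0 ^ 2) 0 fun s => ?_).trans ?_
    · simp [hh5F2]
      ring
    · change _ = -24 * a * z 0 ^ 2 + 24 * z 3 ^ 2 - 32 * z 0 ^ 2 * z 1
      ring
  -- The constant coefficient is the part of `F₂` free of the variable: the value of `F₂` at `z`
  -- minus its monomials containing that variable.
  · refine (pdz_of_cubic _ z 2 (hh5F2 a z + 12 * z 0 * z 2 * z 3)
      (-12 * z 0 * z 3) 0 0 fun s => ?_).trans ?_
    · simp [hh5F2]
      ring
    · change _ = -12 * z 0 * z 3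
      ring
  · refine (pdz_of_cubic _ z 3 (hh5F2 a z + 12 * z 0 * z 2 * z 3 - 24 * z 1 * z 3 ^ 2)
      (-12 * z 0 * z 2) (24 * z 1) 0 fun s => ?_).trans ?_
    · simp [hh5F2]
      ring
    · change _ = -12 * z 0 * z 2 + 48 * z 1 * z 3
      ring
  · refine (pdz_of_cubic _ z 4 (hh5F2 a z - z 4 ^ 2 - 6 * a * z 0 * z 4)
      (6 * a * z 0) 1 0 fun s => ?_).trans ?_
    · simp [hh5F2]
      ring
    · change _ = 2 * z 4 + 6 * a * z 0
      ring

theorem pdz_hh5F3 (z : Fin 5 → ℂ) :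
    pdz hh5F3 z =
      ![z 4 - 4 * z 0 * z 1,
        -2 * z 0 ^ 2,
        0,
        -6 * z 3,
        z 0] := by
  funext k
  fin_cases k
  · refine (pdz_of_cubic _ z 0 (-3 * z 3 ^ 2)
      (z 4) (-2 * z 1) 0 fun s => ?_).trans ?_
    · simp [hh5F3]
      ring
    · change _ = z 4 - 4 * z 0 * z 1
      ring
  · refine (pdz_of_cubic _ z 1 (z 0 * z 4 - 3 * z 3 ^ 2)
      (-2 * z 0 ^ 2) 0 0 fun s => ?_).trans ?_
    · simp [hh5F3]
      ring
    · change _ = -2 * z 0 ^ 2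
      ring
  · refine (pdz_of_cubic _ z 2 (hh5F3 z)
      0 0 0 fun s => ?_).trans ?_
    · simp [hh5F3]
    · change _ = 0
      ring
  · refine (pdz_of_cubic _ z 3 (z 0 * z 4 - 2 * z 0 ^ 2 * z 1)
      0 (-3) 0 fun s => ?_).trans ?_
    · simp [hh5F3]
      ring
    · change _ = -6 * z 3
      ring
  · refine (pdz_of_cubic _ z 4 (-3 * z 3 ^ 2 - 2 * z 0 ^ 2 * z 1)
      (z 0) 0 0 fun s => ?_).trans ?_
    · simp [hh5F3]
      ring
    · change _ = z 0
      ring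

/-- The five-dimensional Hénon–Heiles system is Hamiltonian: `X = J ∇F₁`, `F₃` is a
Casimir of `J`, `F₁` and `F₂` are in involution, and `F₁, F₂, F₃` are first integrals
of `X`. -/
theorem hh5_structure (a : ℂ) :
    (∀ (z : Fin 5 → ℂ) (k : Fin 5),
      hh5X a z k = ∑ l : Fin 5, hh5J z k l * pdz (hh5F1 a) z l) ∧
    (∀ (z : Fin 5 → ℂ) (k : Fin 5),
      ∑ l : Fin 5, hh5J z k l * pdz hh5F3 z l = 0) ∧
    (∀ z : Fin 5 → ℂ,
      ∑ k : Fin 5, pdz (hh5F2 a) z k * (∑ l : Fin 5, hh5J z k l * pdz (hh5F1 a) z l) = 0) ∧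
    (∀ z : Fin 5 → ℂ,
      (∑ k : Fin 5, pdz (hh5F1 a) z k * hh5X a z k = 0) ∧
      (∑ k : Fin 5, pdz (hh5F2 a) z k * hh5X a z k = 0) ∧
      (∑ k : Fin 5, pdz hh5F3 z k * hh5X a z k = 0)) := by
  have hX : ∀ (z : Fin 5 → ℂ) (k : Fin 5),
      hh5X a z k = ∑ l : Fin 5, hh5J z k l * pdz (hh5F1 a) z l := by
    intro z k
    rw [pdz_hh5F1]
    fin_cases k <;> simp [hh5X, hh5J, Fin.sum_univ_five] <;> ring
  have h₂ : ∀ z : Fin 5 → ℂ, ∑ k : Fin 5, pdz (hh5F2 a) z k * hh5X a z k = 0 := by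
    intro z
    simp [pdz_hh5F2, hh5X, Fin.sum_univ_five]
    ring
  refine ⟨hX, ?_, ?_, fun z => ⟨?_, h₂ z, ?_⟩⟩
  · intro z k
    rw [pdz_hh5F3]
    fin_cases k <;> simp [hh5J, Fin.sum_univ_five] <;> ring
  · intro z
    simpa only [hX] using h₂ z
  · simp [pdz_hh5F1, hh5X, Fin.sum_univ_five]
    ring
  · simp [pdz_hh5F3, hh5X, Fin.sum_univ_five]
    ring
end

section
/- On ℂ⁴ with coordinates (q_1, q_2, p_1, p_2), let H_1 = ½(p_1² + p_2²) − (3/2) q_1² q_2² − ¼ q_1⁴ − 2 q_2⁴ and H_2 = p_1⁴ − 6 q_1² q_2² p_1² + q_1⁴ q_2⁴ − q_1⁴ p_1² + q_1⁶ q_2² + 4 q_1³ q_2 p_1 p_2 − q_1⁴ p_2² + ¼ q_1⁸. Then H_1 and H_2 are in involution for the canonical Poisson bracket: {H_1, H_2} = Σ_{k=1}^{2} ( (∂H_1/∂p_k)(∂H_2/∂q_k) − (∂H_1/∂q_k)(∂H_2/∂p_k) ) = 0 identically on ℂ⁴. -/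
/-!
Each Hamiltonian is a polynomial in each coordinate separately, so collecting its coefficients in
that coordinate gives the eight partial derivatives in closed form (`deriv_of_eq_poly`). After
substituting them, the bracket is a polynomial in `q1, q2, p1, p2` whose monomials all cancel.
-/

/-- The RDG (m = 4) Hamiltonian `H₁ = ½(p₁² + p₂²) - (3/2)q₁²q₂² - ¼q₁⁴ - 2q₂⁴`. -/
noncomputable def rdgH1 (q1 q2 p1 p2 : ℂ) : ℂ :=
  (1 / 2) * (p1 ^ 2 + p2 ^ 2) - (3 / 2) * q1 ^ 2 * q2 ^ 2
    - (1 / 4) * q1 ^ 4 - 2 * q2 ^ 4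

/-- The second (degree 8) first integral of the RDG system. -/
noncomputable def rdgH2 (q1 q2 p1 p2 : ℂ) : ℂ :=
  p1 ^ 4 - 6 * q1 ^ 2 * q2 ^ 2 * p1 ^ 2 + q1 ^ 4 * q2 ^ 4 - q1 ^ 4 * p1 ^ 2
    + q1 ^ 6 * q2 ^ 2 + 4 * q1 ^ 3 * q2 * p1 * p2 - q1 ^ 4 * p2 ^ 2
    + (1 / 4) * q1 ^ 8

/-- Every partial derivative in the bracket is that of a polynomial in one variable; the degrees
listed here are the only ones that occur in `rdgH1` and `rdgH2`. -/
lemma deriv_of_eq_poly {f : ℂ → ℂ} {x : ℂ} (a b c d e g h : ℂ)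
    (hf : ∀ s, f s = a + b * s + c * s ^ 2 + d * s ^ 3 + e * s ^ 4 + g * s ^ 6 + h * s ^ 8) :
    deriv f x = b + 2 * c * x + 3 * d * x ^ 2 + 4 * e * x ^ 3 + 6 * g * x ^ 5 + 8 * h * x ^ 7 := by
  rw [funext hf]
  have H := ((((((hasDerivAt_const x a).add ((hasDerivAt_id x).const_mul b)).add
    ((hasDerivAt_pow 2 x).const_mul c)).add ((hasDerivAt_pow 3 x).const_mul d)).add
    ((hasDerivAt_pow 4 x).const_mul e)).add ((hasDerivAt_pow 6 x).const_mul g)).add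
    ((hasDerivAt_pow 8 x).const_mul h)
  refine (H.deriv).trans ?_
  norm_num
  ring

/-- The RDG integrals `H₁` and `H₂` are in involution for the canonical Poisson bracket:
`{H₁, H₂} = ∑ₖ (∂H₁/∂pₖ ∂H₂/∂qₖ - ∂H₁/∂qₖ ∂H₂/∂pₖ) = 0` identically on `ℂ⁴`. -/
theorem rdg_poisson_commute :
    ∀ q1 q2 p1 p2 : ℂ,
      deriv (fun s => rdgH1 q1 q2 s p2) p1 * deriv (fun s => rdgH2 s q2 p1 p2) q1
      - deriv (fun s => rdgH1 s q2 p1 p2) q1 * deriv (fun s => rdgH2 q1 q2 s p2) p1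
      + deriv (fun s => rdgH1 q1 q2 p1 s) p2 * deriv (fun s => rdgH2 q1 s p1 p2) q2
      - deriv (fun s => rdgH1 q1 s p1 p2) q2 * deriv (fun s => rdgH2 q1 q2 p1 s) p2
      = 0 := by
  intro q1 q2 p1 p2
  rw [deriv_of_eq_poly (f := fun s => rdgH1 q1 q2 s p2) (x := p1)
      (p2 ^ 2/2 - 3/2 * q1 ^ 2 * q2 ^ 2 - q1 ^ 4/4 - 2 * q2 ^ 4) 0 (1/2) 0 0 0 0 (fun s => by rw [rdgH1]; ring),
    deriv_of_eq_poly (f := fun s => rdgH2 s q2 p1 p2) (x := q1)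
      (p1 ^ 4) 0 (-6 * q2 ^ 2 * p1 ^ 2) (4 * q2 * p1 * p2) (q2 ^ 4 - p1 ^ 2 - p2 ^ 2) (q2 ^ 2) (1/4) (fun s => by rw [rdgH2]; ring),
    deriv_of_eq_poly (f := fun s => rdgH1 s q2 p1 p2) (x := q1)
      ((p1 ^ 2+p2 ^ 2)/2 - 2 * q2 ^ 4) 0 (-3/2 * q2 ^ 2) 0 (-1/4) 0 0 (fun s => by rw [rdgH1]; ring),
    deriv_of_eq_poly (f := fun s => rdgH2 q1 q2 s p2) (x := p1)
      (q1 ^ 4 * q2 ^ 4 + q1 ^ 6 * q2 ^ 2 - q1 ^ 4 * p2 ^ 2 + q1 ^ 8/4) (4 * q1 ^ 3 * q2 * p2) (-6 * q1 ^ 2 * q2 ^ 2 - q1 ^ 4) 0 1 0 0 (fun s => by rw [rdgH2]; ring),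
    deriv_of_eq_poly (f := fun s => rdgH1 q1 q2 p1 s) (x := p2)
      (p1 ^ 2/2 - 3/2 * q1 ^ 2 * q2 ^ 2 - q1 ^ 4/4 - 2 * q2 ^ 4) 0 (1/2) 0 0 0 0 (fun s => by rw [rdgH1]; ring),
    deriv_of_eq_poly (f := fun s => rdgH2 q1 s p1 p2) (x := q2)
      (p1 ^ 4 - q1 ^ 4 * p1 ^ 2 - q1 ^ 4 * p2 ^ 2 + q1 ^ 8/4) (4 * q1 ^ 3 * p1 * p2) (-6 * q1 ^ 2 * p1 ^ 2 + q1 ^ 6) 0 (q1 ^ 4) 0 0 (fun s => by rw [rdgH2]; ring),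
    deriv_of_eq_poly (f := fun s => rdgH1 q1 s p1 p2) (x := q2)
      ((p1 ^ 2+p2 ^ 2)/2 - q1 ^ 4/4) 0 (-3/2 * q1 ^ 2) 0 (-2) 0 0 (fun s => by rw [rdgH1]; ring),
    deriv_of_eq_poly (f := fun s => rdgH2 q1 q2 p1 s) (x := p2)
      (p1 ^ 4 - 6 * q1 ^ 2 * q2 ^ 2 * p1 ^ 2 + q1 ^ 4 * q2 ^ 4 - q1 ^ 4 * p1 ^ 2 + q1 ^ 6 * q2 ^ 2 + q1 ^ 8/4) (4 * q1 ^ 3 * q2 * p1) (-q1 ^ 4) 0 0 0 0 (fun s => by rw [rdgH2]; ring)]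
  ring
end

section
/- Suppose q_1, q_2, p_1, p_2 : ℝ → ℂ are differentiable and solve the RDG system q̇_1 = p_1, q̇_2 = p_2, ṗ_1 = q_1(q_1² + 3 q_2²), ṗ_2 = q_2(3 q_1² + 8 q_2²). Define z_1 = q_1², z_2 = q_2, z_3 = p_2, z_4 = q_1 p_1, z_5 = p_1² − q_1² q_2². Then (z_1,…,z_5) solves the five-dimensional system ż_1 = 2 z_4, ż_2 = z_3, ż_3 = z_2(3 z_1 + 8 z_2²), ż_4 = z_1² + 4 z_1 z_2² + z_5, ż_5 = 2 z_1 z_4 + 4 z_2² z_4 − 2 z_1 z_2 z_3. -/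
/-- Solutions of the RDG system
`q̇₁ = p₁, q̇₂ = p₂, ṗ₁ = q₁(q₁² + 3q₂²), ṗ₂ = q₂(3q₁² + 8q₂²)` are mapped, by
`z₁ = q₁², z₂ = q₂, z₃ = p₂, z₄ = q₁p₁, z₅ = p₁² - q₁²q₂²`, to solutions of the
five-dimensional system
`ż₁ = 2z₄, ż₂ = z₃, ż₃ = z₂(3z₁ + 8z₂²), ż₄ = z₁² + 4z₁z₂² + z₅,`
`ż₅ = 2z₁z₄ + 4z₂²z₄ - 2z₁z₂z₃`. -/
theorem rdg_to_five_dim (q1 q2 p1 p2 : ℝ → ℂ)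
    (hq1 : Differentiable ℝ q1) (hq2 : Differentiable ℝ q2)
    (hp1 : Differentiable ℝ p1) (hp2 : Differentiable ℝ p2)
    (h1 : ∀ t, deriv q1 t = p1 t)
    (h2 : ∀ t, deriv q2 t = p2 t)
    (h3 : ∀ t, deriv p1 t = q1 t * ((q1 t) ^ 2 + 3 * (q2 t) ^ 2))
    (h4 : ∀ t, deriv p2 t = q2 t * (3 * (q1 t) ^ 2 + 8 * (q2 t) ^ 2)) :
    ∀ t : ℝ,
      deriv (fun s => (q1 s) ^ 2) t = 2 * (q1 t * p1 t) ∧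
      deriv (fun s => q2 s) t = p2 t ∧
      deriv (fun s => p2 s) t = q2 t * (3 * (q1 t) ^ 2 + 8 * (q2 t) ^ 2) ∧
      deriv (fun s => q1 s * p1 s) t =
        ((q1 t) ^ 2) ^ 2 + 4 * (q1 t) ^ 2 * (q2 t) ^ 2
          + ((p1 t) ^ 2 - (q1 t) ^ 2 * (q2 t) ^ 2) ∧
      deriv (fun s => (p1 s) ^ 2 - (q1 s) ^ 2 * (q2 s) ^ 2) t =
        2 * (q1 t) ^ 2 * (q1 t * p1 t) + 4 * (q2 t) ^ 2 * (q1 t * p1 t)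
          - 2 * (q1 t) ^ 2 * q2 t * p2 t := by
  intro t
  have d1 : HasDerivAt q1 (p1 t) t := h1 t ▸ (hq1 t).hasDerivAt
  have d2 : HasDerivAt q2 (p2 t) t := h2 t ▸ (hq2 t).hasDerivAt
  have d3 : HasDerivAt p1 (q1 t * ((q1 t) ^ 2 + 3 * (q2 t) ^ 2)) t :=
    h3 t ▸ (hp1 t).hasDerivAt
  refine ⟨(d1.fun_pow 2).deriv.trans ?_, h2 t, h4 t, (d1.fun_mul d3).deriv.trans ?_,
    ((d3.fun_pow 2).fun_sub ((d1.fun_pow 2).fun_mul (d2.fun_pow 2))).deriv.trans ?_⟩ <;>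
  · push_cast
    ring
end

section
/- On ℂ⁵ with coordinates (z_1,…,z_5), let X be the polynomial vector field X = (2z_4, z_3, z_2(3z_1 + 8z_2²), z_1² + 4z_1 z_2² + z_5, 2z_1 z_4 + 4z_2² z_4 − 2z_1 z_2 z_3), and let F_1 = ½ z_5 − z_1 z_2² + ½ z_3² − ¼ z_1² − 2 z_2⁴, F_2 = z_5² − z_1² z_5 + 4 z_1 z_2 z_3 z_4 − z_1² z_3² + ¼ z_1⁴ − 4 z_2² z_4², F_3 = z_1 z_5 + z_1² z_2² − z_4². Then: (i) each F_k (k = 1,2,3) is a first integral of X, i.e. ⟨∇F_k, X⟩ = 0 identically on ℂ⁵; and (ii) the involution σ(z_1, z_2, z_3, z_4, z_5) = (z_1, −z_2, z_3, −z_4, z_5) preserves the first integrals, F_k ∘ σ = F_k for k = 1,2,3, and reverses the flow: X(σ(z)) = −σ(X(z)) for all z ∈ ℂ⁵. -/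
/-- The five-dimensional RDG vector field. -/
noncomputable def rdg5X (z : Fin 5 → ℂ) : Fin 5 → ℂ :=
  ![2 * z 3,
    z 2,
    z 1 * (3 * z 0 + 8 * (z 1) ^ 2),
    (z 0) ^ 2 + 4 * z 0 * (z 1) ^ 2 + z 4,
    2 * z 0 * z 3 + 4 * (z 1) ^ 2 * z 3 - 2 * z 0 * z 1 * z 2]

/-- `F₁ = ½z₅ - z₁z₂² + ½z₃² - ¼z₁² - 2z₂⁴`. -/
noncomputable def rdg5F1 (z : Fin 5 → ℂ) : ℂ :=
  (1 / 2) * z 4 - z 0 * (z 1) ^ 2 + (1 / 2) * (z 2) ^ 2 - (1 / 4) * (z 0) ^ 2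
    - 2 * (z 1) ^ 4

/-- `F₂ = z₅² - z₁²z₅ + 4z₁z₂z₃z₄ - z₁²z₃² + ¼z₁⁴ - 4z₂²z₄²`. -/
noncomputable def rdg5F2 (z : Fin 5 → ℂ) : ℂ :=
  (z 4) ^ 2 - (z 0) ^ 2 * z 4 + 4 * z 0 * z 1 * z 2 * z 3 - (z 0) ^ 2 * (z 2) ^ 2
    + (1 / 4) * (z 0) ^ 4 - 4 * (z 1) ^ 2 * (z 3) ^ 2

/-- `F₃ = z₁z₅ + z₁²z₂² - z₄²`. -/
noncomputable def rdg5F3 (z : Fin 5 → ℂ) : ℂ :=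
  z 0 * z 4 + (z 0) ^ 2 * (z 1) ^ 2 - (z 3) ^ 2

/-- The reflection `σ(z₁, z₂, z₃, z₄, z₅) = (z₁, -z₂, z₃, -z₄, z₅)`. -/
def rdg5σ (z : Fin 5 → ℂ) : Fin 5 → ℂ :=
  ![z 0, -z 1, z 2, -z 3, z 4]

/-- Along the line `s ↦ update z k s` defining `pdz`, the coordinates vary at rate `0` or `1`;
this is the base case for differentiating polynomials in the coordinates. -/
theorem hasDerivAt_update_apply (z : Fin 5 → ℂ) (k j : Fin 5) :
    HasDerivAt (fun s => Function.update z k s j) (if j = k then 1 else 0) (z k) := by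
  by_cases h : j = k
  · subst h
    simpa using hasDerivAt_id' (z j)
  · simpa [h] using hasDerivAt_const (z k) (z j)

theorem pdz_rdg5F1 (z : Fin 5 → ℂ) (k : Fin 5) :
    pdz rdg5F1 z k =
      (![-(z 1) ^ 2 - z 0 / 2, -2 * z 0 * z 1 - 8 * (z 1) ^ 3, z 2, 0, 1 / 2] : Fin 5 → ℂ) k := by
  have h := hasDerivAt_update_apply z k
  -- The function differentiated by `H` is `fun s => rdg5F1 (Function.update z k s)` up to unfolding.
  have H := (((((h 4).const_mul (1 / 2)).fun_sub ((h 0).fun_mul ((h 1).fun_pow 2))).fun_add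
    (((h 2).fun_pow 2).const_mul (1 / 2))).fun_sub (((h 0).fun_pow 2).const_mul (1 / 4))).fun_sub
    (((h 1).fun_pow 4).const_mul 2)
  refine (HasDerivAt.deriv H).trans ?_
  fin_cases k <;> simp <;> ring

theorem pdz_rdg5F2 (z : Fin 5 → ℂ) (k : Fin 5) :
    pdz rdg5F2 z k = (![-2 * z 0 * z 4 + 4 * z 1 * z 2 * z 3 - 2 * z 0 * (z 2) ^ 2 + (z 0) ^ 3,
      4 * z 0 * z 2 * z 3 - 8 * z 1 * (z 3) ^ 2,
      4 * z 0 * z 1 * z 3 - 2 * (z 0) ^ 2 * z 2,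
      4 * z 0 * z 1 * z 2 - 8 * (z 1) ^ 2 * z 3,
      2 * z 4 - (z 0) ^ 2] : Fin 5 → ℂ) k := by
  have h := hasDerivAt_update_apply z k
  have H := ((((((h 4).fun_pow 2).fun_sub (((h 0).fun_pow 2).fun_mul (h 4))).fun_add
    ((((h 0).const_mul 4).fun_mul (h 1)).fun_mul (h 2) |>.fun_mul (h 3))).fun_sub
    (((h 0).fun_pow 2).fun_mul ((h 2).fun_pow 2))).fun_add
    (((h 0).fun_pow 4).const_mul (1 / 4))).fun_sub
    ((((h 1).fun_pow 2).const_mul 4).fun_mul ((h 3).fun_pow 2))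
  refine (HasDerivAt.deriv H).trans ?_
  -- The excluded lemmas would cancel common factors, leaving disjunctions that `ring` cannot close.
  fin_cases k <;> simp [-mul_eq_mul_left_iff, -mul_eq_mul_right_iff] <;> ring

theorem pdz_rdg5F3 (z : Fin 5 → ℂ) (k : Fin 5) :
    pdz rdg5F3 z k =
      (![z 4 + 2 * z 0 * (z 1) ^ 2, 2 * (z 0) ^ 2 * z 1, 0, -2 * z 3, z 0] : Fin 5 → ℂ) k := by
  have h := hasDerivAt_update_apply z k
  have H := (((h 0).fun_mul (h 4)).fun_add (((h 0).fun_pow 2).fun_mul ((h 1).fun_pow 2))).fun_sub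
    ((h 3).fun_pow 2)
  refine (HasDerivAt.deriv H).trans ?_
  fin_cases k <;> simp <;> ring

/-- For the five-dimensional RDG system: `F₁, F₂, F₃` are first integrals of the vector
field `X`, and the involution `σ` preserves the first integrals while reversing the
flow, `X ∘ σ = -σ ∘ X`. -/
theorem rdg5_structure :
    (∀ z : Fin 5 → ℂ,
      (∑ k : Fin 5, pdz rdg5F1 z k * rdg5X z k = 0) ∧
      (∑ k : Fin 5, pdz rdg5F2 z k * rdg5X z k = 0) ∧
      (∑ k : Fin 5, pdz rdg5F3 z k * rdg5X z k = 0)) ∧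
    (∀ z : Fin 5 → ℂ,
      rdg5F1 (rdg5σ z) = rdg5F1 z ∧
      rdg5F2 (rdg5σ z) = rdg5F2 z ∧
      rdg5F3 (rdg5σ z) = rdg5F3 z) ∧
    (∀ z : Fin 5 → ℂ, rdg5X (rdg5σ z) = -rdg5σ (rdg5X z)) := by
  refine ⟨fun z => ⟨?_, ?_, ?_⟩, fun z => ⟨?_, ?_, ?_⟩, fun z => ?_⟩
  · simp [Fin.sum_univ_five, pdz_rdg5F1, rdg5X]; ring
  · simp [Fin.sum_univ_five, pdz_rdg5F2, rdg5X]; ring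
  · simp [Fin.sum_univ_five, pdz_rdg5F3, rdg5X]; ring
  · simp [rdg5F1, rdg5σ]; ring
  · simp [rdg5F2, rdg5σ]
  · simp [rdg5F3, rdg5σ]
  · ext i
    fin_cases i <;> simp [rdg5X, rdg5σ] <;> ring
end
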